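/- Let L be a residuated lattice, E_L the disjoint union over P ∈ Spec(L) of the quotients L/O(P), equipped with the topology T(B) generated by the base B = {D(F, a) : F a filter of L, a ∈ L}, where D(F, a) = {a_P : P ∈ D(F)}, and let Spec(L) carry the Stone topology. Then the canonical projection π : E_L → Spec(L), a_P ↦ P, is a surjective local homeomorphism: for every e ∈ E_L there exist open neighbourhoods U of e and U′ of π(e) such that π maps U homeomorphically onto U′. -/

import Mathlib

/-- A residuated lattice: a bounded lattice with a commutative monoid
operation `mul` whose identity is the top element, and a residuum `himp`
satisfying `mul x y ≤ z ↔ x ≤ himp y z`. Here `⊤` plays the role of `1`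
and `⊥` the role of `0`. -/
class ResiduatedLattice (L : Type*) extends Lattice L, BoundedOrder L where
  mul : L → L → L
  himp : L → L → L
  mul_comm : ∀ x y : L, mul x y = mul y x
  mul_assoc : ∀ x y z : L, mul (mul x y) z = mul x (mul y z)
  mul_top : ∀ x : L, mul x ⊤ = x
  residuation : ∀ x y z : L, mul x y ≤ z ↔ x ≤ himp y z

namespace ResiduatedLattice

variable {L : Type*} [ResiduatedLattice L]

/-- A filter of a residuated lattice: a nonempty, upward closed subset
closed under `mul`. -/
def IsFilter (F : Set L) : Prop :=
  F.Nonempty ∧ (∀ x y : L, x ∈ F → x ≤ y → y ∈ F) ∧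
    ∀ x y : L, x ∈ F → y ∈ F → mul x y ∈ F

/-- A prime filter: a proper filter such that `x ⊔ y ∈ P` implies
`x ∈ P` or `y ∈ P`. -/
def IsPrimeFilter (P : Set L) : Prop :=
  IsFilter P ∧ P ≠ Set.univ ∧ ∀ x y : L, x ⊔ y ∈ P → x ∈ P ∨ y ∈ P

/-- `filterGen X` is the smallest filter containing `X`. -/
def filterGen (X : Set L) : Set L := ⋂₀ {F : Set L | IsFilter F ∧ X ⊆ F}

/-- The prime spectrum: the set of all prime filters. -/
def Spectrum (L : Type*) [ResiduatedLattice L] := {P : Set L // IsPrimeFilter P}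

/-- `D X = {P ∈ Spec L | X ⊄ P}`. -/
def D (X : Set L) : Set (Spectrum L) := {P : Spectrum L | ¬ X ⊆ P.1}

/-- `O P = {x | a ⊔ x = 1 for some a ∉ P}`. -/
def O (P : Set L) : Set L := {x : L | ∃ a ∉ P, a ⊔ x = ⊤}

/-- The congruence relation associated to a filter `F`:
`x ≡_F y` iff `(x → y) ⊗ (y → x) ∈ F`. -/
def rel (F : Set L) (x y : L) : Prop := mul (himp x y) (himp y x) ∈ F

end ResiduatedLattice

namespace ResiduatedLattice

variable {L : Type*} [ResiduatedLattice L]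

/-- The family of sets of the form `D X`, the open sets of the Stone topology. -/
def stoneOpens (L : Type*) [ResiduatedLattice L] : Set (Set (Spectrum L)) :=
  {U : Set (Spectrum L) | ∃ X : Set L, U = D X}

/-- The Stone topology on `Spec(L)`, whose open sets are exactly the `D X`. -/
instance : TopologicalSpace (Spectrum L) :=
  TopologicalSpace.generateFrom (stoneOpens L)

/-- The total space `E_L`: the disjoint union over `P ∈ Spec(L)` of the
quotients `L/O(P)` (quotient by the relation `x ≡ y` iff
`(x → y) ⊗ (y → x) ∈ O(P)`). -/
def EL (L : Type*) [ResiduatedLattice L] :=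
  (P : Spectrum L) × Quot (rel (O P.1))

/-- `a_P`, the class of `a` in the stalk `L/O(P)`, viewed in `E_L`. -/
def stalkMk (P : Spectrum L) (a : L) : EL L := ⟨P, Quot.mk _ a⟩

/-- The canonical projection `π : E_L → Spec(L)`, `a_P ↦ P`. -/
def proj (L : Type*) [ResiduatedLattice L] : EL L → Spectrum L := fun e => e.1

/-- `D(F, a) = {a_P : P ∈ D(F)}`. -/
def DFa (F : Set L) (a : L) : Set (EL L) :=
  {e : EL L | ∃ P ∈ D F, e = stalkMk P a}

/-- The base `B = {D(F, a) : F a filter of L, a ∈ L}` for the topology on `E_L`. -/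
def ELBase (L : Type*) [ResiduatedLattice L] : Set (Set (EL L)) :=
  {S : Set (EL L) | ∃ (F : Set L) (a : L), IsFilter F ∧ S = DFa F a}

/-- The topology `T(B)` on `E_L` generated by the base `B`. -/
instance : TopologicalSpace (EL L) :=
  TopologicalSpace.generateFrom (ELBase L)

end ResiduatedLattice

/-!
Each `a : L` defines a global section `P ↦ a_P` of `π`, and every point of `E_L` lies on one of
these. So it suffices that `π` is continuous and that each of these sections is continuous with open
range. The substantial point is the continuity of the sections: two of them, given by `a` and `b`,
agree at `P` exactly when `x = (a → b) ⊗ (b → a)` lies in `O(P)`, and `{P | x ∈ O(P)}` is the union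
of the open sets `D({d})` with `d ∨ x = 1`. Primality of `P` enters in showing that `O(P)` is a
filter, which makes `≡` an equivalence relation, so that equality in the stalk is `≡` itself.
-/

open Set Topology

theorem isLocalHomeomorph_of_continuous_sections {X Y : Type*} [TopologicalSpace X]
    [TopologicalSpace Y] {f : X → Y} (hf : Continuous f)
    (hsec : ∀ x, ∃ s : Y → X,
      Continuous s ∧ IsOpen (range s) ∧ Function.LeftInverse f s ∧ x ∈ range s) :
    IsLocalHomeomorph f := by
  refine IsLocalHomeomorph.mk f fun x => ?_
  obtain ⟨s, hs, hopen, hfs, hx⟩ := hsec x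
  have : Nonempty Y := ⟨f x⟩
  have hemb : IsOpenEmbedding s := ⟨hfs.isEmbedding hf hs, hopen⟩
  refine ⟨(hemb.toOpenPartialHomeomorph s).symm, by simpa using hx, ?_⟩
  rintro _ ⟨y, -, rfl⟩
  exact (hfs y).trans (hemb.toOpenPartialHomeomorph_left_inv s).symm

namespace ResiduatedLattice

local infixl:70 " ⊗ " => mul
local infixr:60 " ⇒ " => himp

section Arithmetic

variable {L : Type*} [ResiduatedLattice L]

theorem gc_mul_himp (x : L) : GaloisConnection (· ⊗ x) (x ⇒ ·) :=
  fun y z => residuation y x z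

protected theorem mul_le_mul_left (x : L) {y z : L} (h : y ≤ z) : x ⊗ y ≤ x ⊗ z := by
  simpa only [mul_comm x] using (gc_mul_himp x).monotone_l h

protected theorem sup_mul (x y z : L) : (x ⊔ y) ⊗ z = x ⊗ z ⊔ y ⊗ z :=
  (gc_mul_himp z).l_sup

theorem himp_mul_le (x y : L) : (x ⇒ y) ⊗ x ≤ y :=
  (gc_mul_himp x).l_u_le y

protected theorem top_mul (x : L) : ⊤ ⊗ x = x := by
  rw [mul_comm, mul_top]

theorem mul_le_left (x y : L) : x ⊗ y ≤ x :=
  (ResiduatedLattice.mul_le_mul_left x le_top).trans_eq (mul_top x)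

theorem mul_le_right (x y : L) : x ⊗ y ≤ y :=
  (mul_comm x y).trans_le (mul_le_left y x)

protected theorem himp_self (x : L) : x ⇒ x = ⊤ :=
  top_le_iff.1 ((residuation _ _ _).1 (mul_le_right ⊤ x))

theorem himp_mul_himp_le (x y z : L) : (x ⇒ y) ⊗ (y ⇒ z) ≤ x ⇒ z :=
  (residuation _ _ _).1 <| calc
    (x ⇒ y) ⊗ (y ⇒ z) ⊗ x = (y ⇒ z) ⊗ ((x ⇒ y) ⊗ x) := by rw [mul_comm (x ⇒ y), mul_assoc]
    _ ≤ (y ⇒ z) ⊗ y := ResiduatedLattice.mul_le_mul_left _ (himp_mul_le x y)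
    _ ≤ z := himp_mul_le y z

theorem sup_mul_eq_top {a x y : L} (hx : a ⊔ x = ⊤) (hy : a ⊔ y = ⊤) : a ⊔ x ⊗ y = ⊤ := by
  have hle : y ≤ a ⊔ x ⊗ y := calc
    y = (a ⊔ x) ⊗ y := by rw [hx, ResiduatedLattice.top_mul]
    _ = a ⊗ y ⊔ x ⊗ y := ResiduatedLattice.sup_mul a x y
    _ ≤ a ⊔ x ⊗ y := sup_le_sup_right (mul_le_left a y) _
  exact top_le_iff.1 (hy.ge.trans (sup_le le_sup_left hle))

end Arithmetic

section Filter

variable {L : Type*} [ResiduatedLattice L] {F : Set L}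

theorem IsFilter.mem_of_le (hF : IsFilter F) {x y : L} (hx : x ∈ F) (hxy : x ≤ y) : y ∈ F :=
  hF.2.1 x y hx hxy

theorem IsFilter.top_mem (hF : IsFilter F) : ⊤ ∈ F :=
  hF.1.elim fun _ hx => hF.mem_of_le hx le_top

theorem IsFilter.mul_mem_iff (hF : IsFilter F) {x y : L} : x ⊗ y ∈ F ↔ x ∈ F ∧ y ∈ F :=
  ⟨fun h => ⟨hF.mem_of_le h (mul_le_left x y), hF.mem_of_le h (mul_le_right x y)⟩,
    fun h => hF.2.2 x y h.1 h.2⟩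

theorem IsFilter.himp_trans (hF : IsFilter F) {x y z : L} (hxy : x ⇒ y ∈ F) (hyz : y ⇒ z ∈ F) :
    x ⇒ z ∈ F :=
  hF.mem_of_le (hF.mul_mem_iff.2 ⟨hxy, hyz⟩) (himp_mul_himp_le x y z)

theorem IsFilter.rel_iff (hF : IsFilter F) {x y : L} : rel F x y ↔ x ⇒ y ∈ F ∧ y ⇒ x ∈ F :=
  hF.mul_mem_iff

theorem IsFilter.equivalence_rel (hF : IsFilter F) : Equivalence (rel F) where
  refl x := by simpa only [hF.rel_iff, ResiduatedLattice.himp_self, and_self] using hF.top_mem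
  symm h := hF.rel_iff.2 (hF.rel_iff.1 h).symm
  trans hxy hyz := by
    rw [hF.rel_iff] at *
    exact ⟨hF.himp_trans hxy.1 hyz.1, hF.himp_trans hyz.2 hxy.2⟩

theorem isFilter_univ : IsFilter (univ : Set L) :=
  ⟨univ_nonempty, fun _ _ _ _ => mem_univ _, fun _ _ _ _ => mem_univ _⟩

theorem isFilter_sInter {S : Set (Set L)} (hS : ∀ F ∈ S, IsFilter F) : IsFilter (⋂₀ S) :=
  ⟨⟨⊤, fun F hF => (hS F hF).top_mem⟩,
    fun _ _ hx hxy F hF => (hS F hF).mem_of_le (hx F hF) hxy,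
    fun _ _ hx hy F hF => (hS F hF).mul_mem_iff.2 ⟨hx F hF, hy F hF⟩⟩

theorem isFilter_filterGen (X : Set L) : IsFilter (filterGen X) :=
  isFilter_sInter fun _ hF => hF.1

theorem IsFilter.filterGen_subset_iff (hF : IsFilter F) {X : Set L} :
    filterGen X ⊆ F ↔ X ⊆ F :=
  ⟨(subset_sInter fun _ hG => hG.2).trans, fun hX => sInter_subset_of_mem ⟨hF, hX⟩⟩

theorem IsPrimeFilter.isFilter_O {P : Set L} (hP : IsPrimeFilter P) : IsFilter (O P) := by
  obtain ⟨-, hne, hprime⟩ := hP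
  refine ⟨?_, ?_, ?_⟩
  · obtain ⟨a, ha⟩ := (ne_univ_iff_exists_notMem P).1 hne
    exact ⟨⊤, a, ha, sup_top_eq a⟩
  · rintro x y ⟨a, ha, hax⟩ hxy
    exact ⟨a, ha, top_le_iff.1 (hax.ge.trans (sup_le_sup_left hxy a))⟩
  · rintro x y ⟨a, ha, hax⟩ ⟨b, hb, hby⟩
    have hx : a ⊔ b ⊔ x = ⊤ := by rw [sup_right_comm, hax, top_sup_eq]
    have hy : a ⊔ b ⊔ y = ⊤ := by rw [sup_assoc, hby, sup_top_eq]
    exact ⟨a ⊔ b, fun hab => (hprime a b hab).elim ha hb, sup_mul_eq_top hx hy⟩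

end Filter

section Spectrum

variable {L : Type*} [ResiduatedLattice L]

theorem isOpen_D (X : Set L) : IsOpen (D X) :=
  TopologicalSpace.isOpen_generateFrom_of_mem ⟨X, rfl⟩

theorem D_univ : D (univ : Set L) = univ :=
  eq_univ_of_forall fun P hP => P.2.2.1 (univ_subset_iff.1 hP)

theorem D_filterGen (X : Set L) : D (filterGen X) = D X :=
  ext fun P => not_congr P.2.1.filterGen_subset_iff

theorem isOpen_setOf_mem_O (x : L) : IsOpen {P : Spectrum L | x ∈ O P.1} := by
  have hunion : {P : Spectrum L | x ∈ O P.1} = ⋃ d ∈ {d : L | d ⊔ x = ⊤}, D {d} := by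
    ext P
    simp only [O, D, singleton_subset_iff, mem_ofPred_eq, mem_iUnion, exists_prop, and_comm]
  rw [hunion]
  exact isOpen_biUnion fun d _ => isOpen_D {d}

end Spectrum

section EtaleSpace

variable {L : Type*} [ResiduatedLattice L]

theorem exists_stalkMk_proj_eq (e : EL L) : ∃ a, stalkMk (proj L e) a = e := by
  obtain ⟨P, q⟩ := e
  obtain ⟨a, rfl⟩ := Quot.exists_rep q
  exact ⟨a, rfl⟩

theorem stalkMk_eq_stalkMk_iff {P : Spectrum L} {a b : L} :
    stalkMk P a = stalkMk P b ↔ rel (O P.1) a b := by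
  refine ⟨fun h => ?_, fun h => congrArg (Sigma.mk P) (Quot.sound h)⟩
  have hquot : Quot.mk (rel (O P.1)) a = Quot.mk _ b := eq_of_heq (Sigma.mk.inj h).2
  exact P.2.isFilter_O.equivalence_rel.eqvGen_iff.1 (Quot.eqvGen_exact hquot)

theorem stalkMk_mem_DFa_iff {P : Spectrum L} {F : Set L} {a b : L} :
    stalkMk P a ∈ DFa F b ↔ P ∈ D F ∧ rel (O P.1) a b := by
  rw [← stalkMk_eq_stalkMk_iff]
  refine ⟨?_, fun ⟨hP, h⟩ => ⟨P, hP, h⟩⟩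
  rintro ⟨Q, hQ, h⟩
  obtain rfl : P = Q := congrArg (proj L) h
  exact ⟨hQ, h⟩

theorem isOpen_DFa {F : Set L} (hF : IsFilter F) (a : L) : IsOpen (DFa F a) :=
  TopologicalSpace.isOpen_generateFrom_of_mem ⟨F, a, hF, rfl⟩

theorem range_stalkMk (a : L) : range (fun P => stalkMk P a) = DFa univ a := by
  ext e
  simp only [DFa, D_univ, mem_range, mem_univ, true_and, mem_ofPred_eq, eq_comm]

theorem isOpen_range_stalkMk (a : L) : IsOpen (range fun P => stalkMk P a) :=
  range_stalkMk a ▸ isOpen_DFa isFilter_univ a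

theorem continuous_stalkMk (a : L) : Continuous fun P => stalkMk P a := by
  refine continuous_generateFrom_iff.2 ?_
  rintro _ ⟨F, b, -, rfl⟩
  have hpreimage : (fun P => stalkMk P a) ⁻¹' DFa F b =
      D F ∩ {P | (a ⇒ b) ⊗ (b ⇒ a) ∈ O P.1} :=
    ext fun _ => stalkMk_mem_DFa_iff
  rw [hpreimage]
  exact (isOpen_D F).inter (isOpen_setOf_mem_O _)

theorem proj_preimage_D (X : Set L) : proj L ⁻¹' D X = ⋃ a, DFa (filterGen X) a := by
  ext e
  simp only [DFa, D_filterGen, mem_preimage, mem_iUnion]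
  constructor
  · intro he
    obtain ⟨a, ha⟩ := exists_stalkMk_proj_eq e
    exact ⟨a, proj L e, he, ha.symm⟩
  · rintro ⟨a, P, hP, rfl⟩
    exact hP

theorem continuous_proj : Continuous (proj L) := by
  refine continuous_generateFrom_iff.2 ?_
  rintro _ ⟨X, rfl⟩
  rw [proj_preimage_D]
  exact isOpen_iUnion fun a => isOpen_DFa (isFilter_filterGen X) a

end EtaleSpace

/-- the canonical projection `π : E_L → Spec(L)`, `a_P ↦ P`,
is a surjective local homeomorphism. -/
theorem proj_surjective_isLocalHomeomorph (L : Type*) [ResiduatedLattice L] :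
    (∀ (P : Spectrum L) (a : L), proj L (stalkMk P a) = P) ∧
      Function.Surjective (proj L) ∧ IsLocalHomeomorph (proj L) := by
  refine ⟨fun _ _ => rfl, fun P => ⟨stalkMk P ⊤, rfl⟩,
    isLocalHomeomorph_of_continuous_sections continuous_proj fun e => ?_⟩
  obtain ⟨a, ha⟩ := exists_stalkMk_proj_eq e
  exact ⟨fun P => stalkMk P a, continuous_stalkMk a, isOpen_range_stalkMk a, fun _ => rfl,
    proj L e, ha⟩

end ResiduatedLattice
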